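/- Let β := ( ∫_0^∞ 4λ/(e^{πλ}+1) dλ )^{1/2}. For every ℂ-valued Borel simple function φ on (−1,1) one has β · ‖φ‖_{L^2} ≤ sup ‖T(θφ)‖_{L^2}, where the supremum is taken over all measurable functions θ on (−1,1) with |θ| = 1 almost everywhere. -/

import Mathlib

open MeasureTheory Filter Set

/-- Lebesgue measure restricted to the interval (-1,1). -/
noncomputable def volIoo : Measure ℝ := volume.restrict (Ioo (-1:ℝ) 1)

/-- The finite Hilbert transform of `f`, defined at `t` as the principal value
`lim_{ε→0⁺} (1/π)(∫_{-1}^{t-ε} + ∫_{t+ε}^{1}) f(x)/(x−t) dx`. -/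
noncomputable def fht (f : ℝ → ℂ) (t : ℝ) : ℂ :=
  limUnder (nhdsWithin (0:ℝ) (Ioi 0)) (fun ε : ℝ =>
    (Real.pi : ℂ)⁻¹ * ((∫ x in Ioo (-1:ℝ) (t - ε), f x / ((x : ℂ) - (t : ℂ))) +
      ∫ x in Ioo (t + ε) (1:ℝ), f x / ((x : ℂ) - (t : ℂ))))

/-- The constant `β = (∫_0^∞ 4λ/(e^{πλ}+1) dλ)^{1/2}`. -/
noncomputable def fhtBeta : ℝ :=
  Real.sqrt (∫ l in Ioi (0:ℝ), 4 * l / (Real.exp (Real.pi * l) + 1))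

/-!
On `L²(ℝ)` let `P` be the projection onto the positive frequencies. A function `f` and its Hardy
space part `P f` have the same Cauchy integrals over the upper half-plane, and those of `P f` vanish
over the lower one; comparing the two at height `y → 0` shows that the principal value integrals
of `f` converge almost everywhere to `2 i P f - i f`, up to the factor `π`. For `f` supported in
`(-1, 1)` this gives `‖f‖ ≤ ‖T f‖ + 2 ‖P f‖`. Multiplying `f` by `e^{-2πinx}` turns `‖P f‖` into the
tail `‖𝓕 f‖_{L²(n, ∞)}` of the Fourier transform, which tends to `0`, so the supremum is at least
`‖f‖`, while `β ≤ 1`.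
-/

open scoped FourierTransform SchwartzMap Topology ENNReal
open Complex (I)

lemma fourier_fourierChar_neg_inner_smul {V E : Type*} [NormedAddCommGroup V]
    [InnerProductSpace ℝ V] [FiniteDimensional ℝ V] [MeasurableSpace V] [BorelSpace V]
    [NormedAddCommGroup E] [NormedSpace ℂ E] (f : V → E) (w₀ w : V) :
    𝓕 (fun v ↦ 𝐞 (-inner ℝ v w₀) • f v) w = 𝓕 f (w + w₀) := by
  simp only [Real.fourier_eq, smul_smul, inner_add_right, neg_add, AddChar.map_add_eq_mul]

section FourierL2

variable {V : Type*} [NormedAddCommGroup V] [InnerProductSpace ℝ V] [FiniteDimensional ℝ V]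
  [MeasurableSpace V] [BorelSpace V]
  {E : Type*} [NormedAddCommGroup E] [InnerProductSpace ℂ E] [CompleteSpace E]

lemma integral_fourier_smul_coeFn_Lp (g : 𝓢(V, ℂ)) (G : Lp E 2 (volume : Measure V)) :
    ∫ v, 𝓕 g v • G v = ∫ v, g v • (𝓕 G : Lp E 2 (volume : Measure V)) v := by
  have h := DFunLike.congr_fun (Lp.fourier_toTemperedDistribution_eq G) g
  rwa [TemperedDistribution.fourier_apply, Lp.toTemperedDistribution_apply,
    Lp.toTemperedDistribution_apply] at h

lemma integral_coeFn_Lp_fourier_smul (F : Lp ℂ 2 (volume : Measure V))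
    (G : Lp E 2 (volume : Measure V)) :
    ∫ v, (𝓕 F : Lp ℂ 2 (volume : Measure V)) v • G v
      = ∫ v, F v • (𝓕 G : Lp E 2 (volume : Measure V)) v := by
  let B := (ContinuousLinearMap.lsmul ℂ ℂ : ℂ →L[ℂ] E →L[ℂ] E).lpPairing
    (volume : Measure V) 2 2
  suffices B (𝓕 F) G = B F (𝓕 G) by
    simpa only [B, ContinuousLinearMap.lpPairing_eq_integral, ContinuousLinearMap.lsmul_apply]
      using this
  refine (SchwartzMap.denseRange_toLpCLM (p := 2) ENNReal.ofNat_ne_top).induction_on F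
    (isClosed_eq (by fun_prop) (by fun_prop)) fun g ↦ ?_
  simp only [SchwartzMap.toLpCLM_apply, B, ContinuousLinearMap.lpPairing_eq_integral,
    ContinuousLinearMap.lsmul_apply]
  calc ∫ v, (𝓕 (g.toLp 2 volume) : Lp ℂ 2 (volume : Measure V)) v • G v
      = ∫ v, 𝓕 g v • G v := integral_congr_ae <| by
        rw [SchwartzMap.toLp_fourier_eq]
        filter_upwards [(𝓕 g).coeFn_toLp 2 volume] with v hv using by rw [hv]
    _ = ∫ v, g v • (𝓕 G : Lp E 2 (volume : Measure V)) v := integral_fourier_smul_coeFn_Lp g G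
    _ = ∫ v, g.toLp 2 volume v • (𝓕 G : Lp E 2 (volume : Measure V)) v :=
      integral_congr_ae <| by
        filter_upwards [g.coeFn_toLp 2 volume] with v hv using by rw [hv]

lemma fourier_toLp_ae_eq {f : V → E} (hf : Integrable f) (hf2 : MemLp f 2) :
    (𝓕 (hf2.toLp f) : Lp E 2 (volume : Measure V)) =ᵐ[volume] 𝓕 f := by
  have hcont : Continuous (𝓕 f) := VectorFourier.fourierIntegral_continuous
    Real.continuous_fourierChar continuous_inner hf
  refine ae_eq_of_integral_contDiff_smul_eq
    ((Lp.memLp _).locallyIntegrable one_le_two) hcont.locallyIntegrable fun g hg hgs ↦ ?_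
  let G : 𝓢(V, ℂ) := (hgs.comp_left (g := Complex.ofReal) rfl).toSchwartzMap
    (Complex.ofRealCLM.contDiff.comp hg)
  calc ∫ v, g v • (𝓕 (hf2.toLp f) : Lp E 2 (volume : Measure V)) v
      = ∫ v, G v • (𝓕 (hf2.toLp f) : Lp E 2 (volume : Measure V)) v := rfl
    _ = ∫ v, 𝓕 G v • hf2.toLp f v := (integral_fourier_smul_coeFn_Lp G _).symm
    _ = ∫ v, 𝓕 (G : V → ℂ) v • f v := by
        refine integral_congr_ae ?_
        filter_upwards [hf2.coeFn_toLp] with v hv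
        rw [hv, SchwartzMap.fourier_coe]
    _ = ∫ v, G v • 𝓕 f v := by
        have h := VectorFourier.integral_fourierIntegral_smul_eq_flip (L := innerₗ V)
          Real.continuous_fourierChar continuous_inner (G.integrable (μ := volume)) hf
        rwa [flip_innerₗ] at h
    _ = ∫ v, g v • 𝓕 f v := rfl

end FourierL2

lemma memLp_two_indicator_Ioi_cexp {a : ℂ} (ha : a.re < 0) (c : ℝ) :
    MemLp ((Ioi c).indicator fun ξ ↦ Complex.exp (a * ξ)) 2 := by
  rw [memLp_indicator_iff_restrict measurableSet_Ioi,
    memLp_two_iff_integrable_sq_norm (by fun_prop)]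
  refine (integrableOn_exp_mul_Ioi (a := 2 * a.re) (by linarith) c).congr
    (.of_forall fun ξ ↦ ?_)
  simp [Complex.norm_exp, ← Real.exp_nat_mul, mul_assoc]

lemma memLp_two_indicator_Iic_cexp {a : ℂ} (ha : 0 < a.re) (c : ℝ) :
    MemLp ((Iic c).indicator fun ξ ↦ Complex.exp (a * ξ)) 2 := by
  rw [memLp_indicator_iff_restrict measurableSet_Iic,
    memLp_two_iff_integrable_sq_norm (by fun_prop)]
  refine (integrableOn_exp_mul_Iic (a := 2 * a.re) (by linarith) c).congr
    (.of_forall fun ξ ↦ ?_)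
  simp [Complex.norm_exp, ← Real.exp_nat_mul, mul_assoc]

lemma fourier_indicator_cexp {s : Set ℝ} (hs : MeasurableSet s) (a : ℂ) (x : ℝ) :
    𝓕 (s.indicator fun ξ : ℝ ↦ Complex.exp (a * ξ)) x
      = ∫ ξ in s, Complex.exp ((a - 2 * Real.pi * I * x) * ξ) := by
  rw [Real.fourier_eq', ← integral_indicator hs]
  congr with ξ
  by_cases hξ : ξ ∈ s
  · simp only [indicator_of_mem hξ, smul_eq_mul, ← Complex.exp_add]
    congr 1
    simp
    ring
  · simp [hξ]

lemma fourier_indicator_Ioi_zero_cexp {a : ℂ} (ha : a.re < 0) (x : ℝ) :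
    𝓕 ((Ioi 0).indicator fun ξ : ℝ ↦ Complex.exp (a * ξ)) x
      = (2 * Real.pi * I * x - a)⁻¹ := by
  rw [fourier_indicator_cexp measurableSet_Ioi, integral_exp_mul_complex_Ioi (by simpa using ha)]
  simp [← one_div, ← div_neg, neg_div]

lemma fourier_indicator_Iic_zero_cexp {a : ℂ} (ha : 0 < a.re) (x : ℝ) :
    𝓕 ((Iic 0).indicator fun ξ : ℝ ↦ Complex.exp (a * ξ)) x
      = -(2 * Real.pi * I * x - a)⁻¹ := by
  rw [fourier_indicator_cexp measurableSet_Iic, integral_exp_mul_complex_Iic (by simpa using ha)]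
  simp [← one_div, ← div_neg]

section HardyProjection

variable {E : Type*} [NormedAddCommGroup E] [InnerProductSpace ℂ E] [CompleteSpace E]
  (F : Lp E 2 (volume : Measure ℝ)) {z : ℂ}

lemma integral_fourier_indicator_smul {s : Set ℝ} (hs : MeasurableSet s) {g : ℝ → ℂ}
    (hg : Integrable (s.indicator g)) (hg2 : MemLp (s.indicator g) 2) :
    ∫ x, 𝓕 (s.indicator g) x • F x
      = ∫ ξ in s, g ξ • (𝓕 F : Lp E 2 (volume : Measure ℝ)) ξ := by
  calc ∫ x, 𝓕 (s.indicator g) x • F x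
      = ∫ x, (𝓕 (hg2.toLp _) : Lp ℂ 2 (volume : Measure ℝ)) x • F x := integral_congr_ae <| by
        filter_upwards [fourier_toLp_ae_eq hg hg2] with x hx using by rw [hx]
    _ = ∫ ξ, hg2.toLp _ ξ • (𝓕 F : Lp E 2 (volume : Measure ℝ)) ξ :=
        integral_coeFn_Lp_fourier_smul _ _
    _ = ∫ ξ, s.indicator (fun ξ ↦ g ξ • (𝓕 F : Lp E 2 (volume : Measure ℝ)) ξ) ξ :=
        integral_congr_ae <| by
        filter_upwards [hg2.coeFn_toLp] with ξ hξ using by rw [hξ, indicator_smul_apply_left]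
    _ = _ := integral_indicator hs

lemma integral_inv_sub_smul_of_im_pos (hz : 0 < z.im) :
    ∫ x : ℝ, ((x : ℂ) - z)⁻¹ • F x = (2 * Real.pi * I) •
      ∫ ξ in Ioi (0 : ℝ), Complex.exp (2 * Real.pi * I * z * ξ) •
        (𝓕 F : Lp E 2 (volume : Measure ℝ)) ξ := by
  have ha : (2 * Real.pi * I * z).re < 0 := by simpa using by positivity
  rw [← integral_fourier_indicator_smul F measurableSet_Ioi
    ((integrable_indicator_iff measurableSet_Ioi).2 (integrableOn_exp_mul_complex_Ioi ha 0))
    (memLp_two_indicator_Ioi_cexp ha 0), ← integral_smul]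
  congr with x
  rw [fourier_indicator_Ioi_zero_cexp ha, smul_smul, ← mul_sub, mul_inv,
    mul_inv_cancel_left₀ Complex.two_pi_I_ne_zero]

lemma integral_inv_sub_smul_of_im_neg (hz : z.im < 0) :
    ∫ x : ℝ, ((x : ℂ) - z)⁻¹ • F x = -(2 * Real.pi * I) •
      ∫ ξ in Iic (0 : ℝ), Complex.exp (2 * Real.pi * I * z * ξ) •
        (𝓕 F : Lp E 2 (volume : Measure ℝ)) ξ := by
  have ha : 0 < (2 * Real.pi * I * z).re := by
    simpa using mul_neg_of_pos_of_neg Real.two_pi_pos hz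
  rw [← integral_fourier_indicator_smul F measurableSet_Iic
    ((integrable_indicator_iff measurableSet_Iic).2 (integrableOn_exp_mul_complex_Iic ha 0))
    (memLp_two_indicator_Iic_cexp ha 0), ← integral_smul]
  congr with x
  rw [fourier_indicator_Iic_zero_cexp ha, smul_smul, neg_mul_neg, ← mul_sub, mul_inv,
    mul_inv_cancel_left₀ Complex.two_pi_I_ne_zero]

/-- The orthogonal projection of `L²(ℝ)` onto the Hardy space of the upper half-plane, that is, onto
the functions with Fourier transform supported in `(0, ∞)`. -/
noncomputable def hardyProj : Lp E 2 (volume : Measure ℝ) :=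
  𝓕⁻ (((Lp.memLp (𝓕 F : Lp E 2 (volume : Measure ℝ))).indicator
    (measurableSet_Ioi (a := 0))).toLp _)

lemma fourier_hardyProj_ae_eq :
    (𝓕 (hardyProj F) : Lp E 2 (volume : Measure ℝ)) =ᵐ[volume]
      (Ioi 0).indicator (𝓕 F : Lp E 2 (volume : Measure ℝ)) := by
  rw [hardyProj, FourierTransform.fourier_fourierInv_eq]
  exact MemLp.coeFn_toLp _

lemma eLpNorm_hardyProj :
    eLpNorm (hardyProj F) 2 volume
      = eLpNorm (𝓕 F : Lp E 2 (volume : Measure ℝ)) 2 (volume.restrict (Ioi 0)) := by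
  rw [← Lp.enorm_def, ← enorm_norm, ← Lp.norm_fourier_eq, enorm_norm, Lp.enorm_def,
    eLpNorm_congr_ae (fourier_hardyProj_ae_eq F), eLpNorm_indicator_eq_eLpNorm_restrict
      measurableSet_Ioi]

lemma integral_inv_sub_smul_hardyProj_of_im_pos (hz : 0 < z.im) :
    ∫ x : ℝ, ((x : ℂ) - z)⁻¹ • hardyProj F x = ∫ x : ℝ, ((x : ℂ) - z)⁻¹ • F x := by
  rw [integral_inv_sub_smul_of_im_pos _ hz, integral_inv_sub_smul_of_im_pos _ hz]
  congr 1
  refine setIntegral_congr_ae measurableSet_Ioi ?_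
  filter_upwards [fourier_hardyProj_ae_eq F] with ξ hξ hξ0
  rw [hξ, indicator_of_mem hξ0]

lemma integral_inv_sub_smul_hardyProj_of_im_neg (hz : z.im < 0) :
    ∫ x : ℝ, ((x : ℂ) - z)⁻¹ • hardyProj F x = 0 := by
  rw [integral_inv_sub_smul_of_im_neg _ hz, setIntegral_eq_zero_of_ae_eq_zero, smul_zero]
  filter_upwards [fourier_hardyProj_ae_eq F] with ξ hξ hξ0
  rw [hξ, indicator_of_notMem (by simpa using hξ0), smul_zero]

end HardyProjection

lemma tendsto_eLpNorm_restrict_of_antitone {α E : Type*} {_ : MeasurableSpace α}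
    [NormedAddCommGroup E] {μ : Measure α} {p : ℝ≥0∞} {f : α → E} (hf : MemLp f p μ)
    (hp : p ≠ ∞) {s : ℕ → Set α} (hs : ∀ n, MeasurableSet (s n)) (hanti : Antitone s)
    (hempty : ⋂ n, s n = ∅) :
    Tendsto (fun n ↦ eLpNorm f p (μ.restrict (s n))) atTop (𝓝 0) := by
  rcases eq_or_ne p 0 with rfl | hp0
  · simp
  let ν : Measure α := μ.withDensity fun x ↦ ‖f x‖ₑ ^ p.toReal
  have hν (n : ℕ) : ∫⁻ x in s n, ‖f x‖ₑ ^ p.toReal ∂μ = ν (s n) :=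
    (withDensity_apply _ (hs n)).symm
  have hν_fin : ν (s 0) ≠ ∞ := by
    rw [← hν]
    exact (lintegral_rpow_enorm_lt_top_of_eLpNorm_lt_top hp0 hp
      (hf.restrict (s 0)).eLpNorm_lt_top).ne
  have hlim : Tendsto (fun n ↦ ν (s n)) atTop (𝓝 0) := by
    simpa only [hempty, measure_empty, Function.comp_def] using
      tendsto_measure_iInter_atTop (fun n ↦ (hs n).nullMeasurableSet) hanti ⟨0, hν_fin⟩
  have hpos : 0 < 1 / p.toReal := one_div_pos.2 (ENNReal.toReal_pos hp0 hp)
  simpa only [eLpNorm_eq_lintegral_rpow_enorm_toReal hp0 hp, hν, ENNReal.zero_rpow_of_pos hpos]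
    using hlim.ennrpow_const (1 / p.toReal)

section FourierTail

variable {E : Type*} [NormedAddCommGroup E] [InnerProductSpace ℂ E] [CompleteSpace E]

lemma eLpNorm_hardyProj_of_ae_eq_fourierChar_smul {f : ℝ → E} (hf : Integrable f)
    (hf2 : MemLp f 2) (s : ℝ) {F : Lp E 2 (volume : Measure ℝ)}
    (hF : F =ᵐ[volume] fun x ↦ 𝐞 (-inner ℝ x s) • f x) :
    eLpNorm (hardyProj F) 2 volume = eLpNorm (𝓕 f) 2 (volume.restrict (Ioi s)) := by
  let g : ℝ → E := fun x ↦ 𝐞 (-inner ℝ x s) • f x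
  have hg : Integrable g := (Real.fourierIntegral_convergent_iff s).2 hf
  have hg2 : MemLp g 2 := hf2.of_le hg.1 (.of_forall fun x ↦ (Circle.norm_smul _ _).le)
  have hFg : F = hg2.toLp g := Lp.ext (hF.trans hg2.coeFn_toLp.symm)
  have hshift : 𝓕 g = 𝓕 f ∘ (· + s) := funext fun w ↦ fourier_fourierChar_neg_inner_smul f s w
  have hmp : MeasurePreserving (· + s) (volume.restrict (Ioi 0)) (volume.restrict (Ioi s)) := by
    simpa using
      (measurePreserving_add_right volume s).restrict_preimage (measurableSet_Ioi (a := s))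
  have hcont : Continuous (𝓕 f) := VectorFourier.fourierIntegral_continuous
    Real.continuous_fourierChar continuous_inner hf
  rw [eLpNorm_hardyProj, hFg, eLpNorm_congr_ae (ae_restrict_of_ae (fourier_toLp_ae_eq hg hg2)),
    hshift, eLpNorm_comp_measurePreserving hcont.aestronglyMeasurable hmp]

lemma tendsto_eLpNorm_fourier_restrict_Ioi {f : ℝ → E} (hf : Integrable f) (hf2 : MemLp f 2) :
    Tendsto (fun n : ℕ ↦ eLpNorm (𝓕 f) 2 (volume.restrict (Ioi (n : ℝ)))) atTop (𝓝 0) := by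
  have hfourier : MemLp (𝓕 f) 2 := (memLp_congr_ae (fourier_toLp_ae_eq hf hf2)).1 (Lp.memLp _)
  refine tendsto_eLpNorm_restrict_of_antitone hfourier ENNReal.ofNat_ne_top
    (fun n ↦ measurableSet_Ioi) (fun m n h ↦ Ioi_subset_Ioi (Nat.cast_le.2 h))
    (eq_empty_iff_forall_notMem.2 fun x hx ↦ ?_)
  obtain ⟨n, hn⟩ := exists_nat_ge x
  exact not_lt.2 hn (mem_iInter.1 hx n)

end FourierTail

/-- The Poisson kernel of the upper half-plane at height `y`, multiplied by `π`. -/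
noncomputable def poissonKernelUHP (y u : ℝ) : ℝ := y / (u ^ 2 + y ^ 2)

lemma poissonKernelUHP_nonneg {y : ℝ} (hy : 0 ≤ y) (u : ℝ) : 0 ≤ poissonKernelUHP y u := by
  unfold poissonKernelUHP
  positivity

lemma measurable_poissonKernelUHP (y : ℝ) : Measurable (poissonKernelUHP y) := by
  unfold poissonKernelUHP
  fun_prop

lemma poissonKernelUHP_eq_pi_mul_cauchyPDFReal {y : ℝ} (hy : 0 < y) :
    poissonKernelUHP y = fun u ↦ Real.pi * ProbabilityTheory.cauchyPDFReal 0 y.toNNReal u := by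
  ext u
  rw [poissonKernelUHP, ProbabilityTheory.cauchyPDFReal_def, Real.coe_toNNReal y hy.le, sub_zero]
  field_simp

lemma integrable_poissonKernelUHP {y : ℝ} (hy : 0 < y) : Integrable (poissonKernelUHP y) := by
  rw [poissonKernelUHP_eq_pi_mul_cauchyPDFReal hy]
  fun_prop

lemma integral_poissonKernelUHP {y : ℝ} (hy : 0 < y) : ∫ u, poissonKernelUHP y u = Real.pi := by
  rw [poissonKernelUHP_eq_pi_mul_cauchyPDFReal hy, integral_const_mul,
    ProbabilityTheory.integral_cauchyPDFReal_eq_one 0 (Real.toNNReal_pos.2 hy).ne', mul_one]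

lemma exists_abs_le_and_poissonKernelUHP_le {y : ℝ} (hy : 0 < y) (u : ℝ) :
    ∃ k : ℕ, |u| ≤ 2 ^ k * y ∧ poissonKernelUHP y u ≤ 4 / (4 ^ k * y) := by
  simp only [poissonKernelUHP]
  rcases le_or_gt |u| y with hu | hu
  · refine ⟨0, by simpa using hu, ?_⟩
    rw [div_le_div_iff₀ (by positivity) (by positivity)]
    nlinarith [sq_nonneg u, sq_nonneg y]
  · obtain ⟨n, hn, hn'⟩ := exists_nat_pow_near (x := |u| / y) (y := 2)
      ((one_le_div hy).2 hu.le) one_lt_two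
    rw [le_div_iff₀ hy] at hn
    rw [div_lt_iff₀ hy] at hn'
    refine ⟨n + 1, hn'.le, ?_⟩
    have hsq : 4 ^ n * y ^ 2 ≤ u ^ 2 := by
      calc (4 : ℝ) ^ n * y ^ 2 = (2 ^ n * y) ^ 2 := by rw [mul_pow, ← pow_mul', pow_mul]; norm_num
        _ ≤ |u| ^ 2 := by gcongr
        _ = u ^ 2 := sq_abs u
    rw [div_le_div_iff₀ (by positivity) (by positivity), pow_succ]
    nlinarith [sq_nonneg y]

lemma lintegral_poissonKernelUHP_mul_le {h : ℝ → ℝ≥0∞} (hh : AEMeasurable h) (t : ℝ) {y : ℝ}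
    (hy : 0 < y) :
    ∫⁻ x, ENNReal.ofReal (poissonKernelUHP y (x - t)) * h x ≤
      ∑' k : ℕ, ENNReal.ofReal (8 * (1 / 2) ^ k) *
        ⨍⁻ x in Metric.closedBall t (2 ^ k * y), h x ∂volume := by
  have hball (k : ℕ) : MeasurableSet (Metric.closedBall t (2 ^ k * y)) :=
    Metric.isClosed_closedBall.measurableSet
  calc ∫⁻ x, ENNReal.ofReal (poissonKernelUHP y (x - t)) * h x
      ≤ ∫⁻ x, ∑' k : ℕ, ENNReal.ofReal (4 / (4 ^ k * y)) *
          (Metric.closedBall t (2 ^ k * y)).indicator h x := by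
        refine lintegral_mono fun x ↦ ?_
        obtain ⟨k, hk, hk'⟩ := exists_abs_le_and_poissonKernelUHP_le hy (x - t)
        refine le_trans ?_ (ENNReal.le_tsum k)
        rw [indicator_of_mem (by simpa [Real.dist_eq] using hk)]
        gcongr
    _ = ∑' k : ℕ, ENNReal.ofReal (4 / (4 ^ k * y)) *
          ∫⁻ x in Metric.closedBall t (2 ^ k * y), h x := by
        rw [lintegral_tsum fun k ↦ (hh.indicator (hball k)).const_mul _]
        simp only [lintegral_const_mul' _ _ ENNReal.ofReal_ne_top, lintegral_indicator (hball _)]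
    _ = _ := by
        congr with k
        have h4 : (4 : ℝ) ^ k = 2 ^ k * 2 ^ k := by rw [← mul_pow]; norm_num
        rw [setLAverage_eq, Real.volume_closedBall, ENNReal.div_eq_inv_mul,
          ← ENNReal.ofReal_inv_of_pos (by positivity), ← mul_assoc,
          ← ENNReal.ofReal_mul (by positivity), h4]
        congr 2
        rw [one_div, inv_pow]
        field_simp
        norm_num

lemma tendsto_tsum_mul_comp_pow_mul {c : ℕ → ℝ≥0∞} (hc : ∑' k, c k ≠ ∞) {A : ℝ → ℝ≥0∞}
    {B : ℝ≥0∞} (hB : B ≠ ∞) (hA : ∀ r > 0, A r ≤ B) (hlim : Tendsto A (𝓝[>] 0) (𝓝 0))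
    {b : ℝ} (hb : 0 < b) :
    Tendsto (fun y ↦ ∑' k, c k * A (b ^ k * y)) (𝓝[>] 0) (𝓝 0) := by
  have hscale (k : ℕ) : Tendsto (fun y : ℝ ↦ b ^ k * y) (𝓝[>] 0) (𝓝[>] 0) := by
    refine tendsto_nhdsWithin_iff.2 ⟨?_, ?_⟩
    · simpa using ((continuous_const_mul (b ^ k)).tendsto 0).mono_left nhdsWithin_le_nhds
    · filter_upwards [self_mem_nhdsWithin] with y hy using mul_pos (pow_pos hb k) hy
  have hterm (k : ℕ) : Tendsto (fun y ↦ c k * A (b ^ k * y)) (𝓝[>] 0) (𝓝 0) := by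
    simpa using ENNReal.Tendsto.const_mul (hlim.comp (hscale k))
      (.inr (ENNReal.ne_top_of_tsum_ne_top hc k))
  simpa [lintegral_count] using tendsto_lintegral_filter_of_dominated_convergence
    (μ := Measure.count) (fun k ↦ c k * B) (.of_forall fun y ↦ measurable_from_top)
    (by
      filter_upwards [self_mem_nhdsWithin] with y hy
      exact .of_forall fun k ↦ mul_le_mul_right (hA _ (mul_pos (pow_pos hb k) hy)) _)
    (by simpa [lintegral_count, ENNReal.tsum_mul_right] using ENNReal.mul_ne_top hc hB)
    (.of_forall hterm)

lemma setLAverage_enorm_le_rpow_mul_eLpNorm {α E : Type*} {_ : MeasurableSpace α} {μ : Measure α}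
    [NormedAddCommGroup E] {f : α → E} {s : Set α} {p : ℝ≥0∞}
    (hf : AEStronglyMeasurable f (μ.restrict s)) (hp : 1 ≤ p) (hs : μ s ≠ 0) (hs' : μ s ≠ ∞) :
    ⨍⁻ x in s, ‖f x‖ₑ ∂μ ≤ (μ s)⁻¹ ^ (1 / p).toReal * eLpNorm f p (μ.restrict s) := by
  have : IsProbabilityMeasure ((μ s)⁻¹ • μ.restrict s) :=
    ⟨by simp [ENNReal.inv_mul_cancel hs hs']⟩
  rw [setLAverage_eq', ← eLpNorm_one_eq_lintegral_enorm, ← smul_eq_mul,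
    ← eLpNorm_smul_measure_of_ne_zero (ENNReal.inv_ne_zero.2 hs')]
  exact eLpNorm_le_eLpNorm_of_exponent_le hp (hf.smul_measure _)

section PoissonPoint

variable {E : Type*} [NormedAddCommGroup E] {g : ℝ → E} {t : ℝ}

/-- `t` is a Poisson point of `g` if the Poisson means of `‖g - g t‖` at `t` tend to `0`; this is
the analogue for the Poisson kernel of a Lebesgue point. -/
def IsPoissonPoint (g : ℝ → E) (t : ℝ) : Prop :=
  Tendsto (fun y ↦ ∫⁻ x, ENNReal.ofReal (poissonKernelUHP y (x - t)) * ‖g x - g t‖ₑ)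
    (𝓝[>] 0) (𝓝 0)

lemma exists_forall_setLAverage_enorm_sub_le {p : ℝ≥0∞} (hp : 1 ≤ p) (hg : MemLp g p) {c : E}
    (h : Tendsto (fun r ↦ ⨍⁻ x in Metric.closedBall t r, ‖g x - c‖ₑ ∂volume) (𝓝[>] 0) (𝓝 0)) :
    ∃ B ≠ ∞, ∀ r > 0, ⨍⁻ x in Metric.closedBall t r, ‖g x - c‖ₑ ∂volume ≤ B := by
  obtain ⟨r₀, hr₀, hsmall⟩ := (mem_nhdsGT_iff_exists_Ioo_subset).1
    (h.eventually_le_const zero_lt_one)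
  rw [mem_Ioi] at hr₀
  have hvol (r : ℝ) (hr : 0 < r) : volume (Metric.closedBall t r) ≠ 0 :=
    (Metric.measure_closedBall_pos volume t hr).ne'
  let B := (volume (Metric.closedBall t r₀))⁻¹ ^ (1 / p).toReal * eLpNorm g p + ‖c‖ₑ
  have hB : B ≠ ∞ := by
    have := ENNReal.inv_ne_top.2 (hvol r₀ hr₀)
    exact ENNReal.add_ne_top.2 ⟨ENNReal.mul_ne_top (by finiteness) hg.eLpNorm_ne_top, by finiteness⟩
  refine ⟨max 1 B, by finiteness, fun r hr ↦ ?_⟩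
  rcases lt_or_ge r r₀ with hrr | hrr
  · exact (hsmall ⟨hr, hrr⟩).trans (le_max_left _ _)
  have hfin : volume (Metric.closedBall t r) ≠ ∞ := measure_closedBall_lt_top.ne
  refine le_max_of_le_right ?_
  calc ⨍⁻ x in Metric.closedBall t r, ‖g x - c‖ₑ ∂volume
      ≤ ⨍⁻ x in Metric.closedBall t r, (‖g x‖ₑ + ‖c‖ₑ) ∂volume :=
        laverage_mono_ae (.of_forall fun x ↦ enorm_sub_le)
    _ = (⨍⁻ x in Metric.closedBall t r, ‖g x‖ₑ ∂volume) + ‖c‖ₑ := by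
        rw [setLAverage_eq', lintegral_add_right _ measurable_const, ← setLAverage_eq',
          ← setLAverage_eq', setLAverage_const (hvol r hr) hfin]
    _ ≤ B := by
        unfold B
        gcongr
        refine (setLAverage_enorm_le_rpow_mul_eLpNorm hg.1.restrict hp (hvol r hr) hfin).trans ?_
        gcongr
        exact Measure.restrict_le_self

lemma isPoissonPoint_of_tendsto_setLAverage {p : ℝ≥0∞} (hp : 1 ≤ p) (hg : MemLp g p)
    (h : Tendsto (fun r ↦ ⨍⁻ x in Metric.closedBall t r, ‖g x - g t‖ₑ ∂volume) (𝓝[>] 0) (𝓝 0)) :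
    IsPoissonPoint g t := by
  obtain ⟨B, hB, hgB⟩ := exists_forall_setLAverage_enorm_sub_le hp hg h
  have hsum : ∑' k : ℕ, ENNReal.ofReal (8 * (1 / 2) ^ k) ≠ ∞ := by
    rw [← ENNReal.ofReal_tsum_of_nonneg (fun k ↦ by positivity)
      (summable_geometric_two.mul_left 8)]
    exact ENNReal.ofReal_ne_top
  refine tendsto_of_tendsto_of_tendsto_of_le_of_le' tendsto_const_nhds
    (tendsto_tsum_mul_comp_pow_mul hsum hB hgB h two_pos) (.of_forall fun y ↦ zero_le) ?_
  filter_upwards [self_mem_nhdsWithin] with y hy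
  exact lintegral_poissonKernelUHP_mul_le (hg.1.sub aestronglyMeasurable_const).enorm t hy

lemma ae_isPoissonPoint {p : ℝ≥0∞} (hp : 1 ≤ p) (hg : MemLp g p) :
    ∀ᵐ t, IsPoissonPoint g t := by
  filter_upwards [(Besicovitch.vitaliFamily volume).ae_tendsto_lintegral_enorm_sub_div
    (hg.locallyIntegrable hp)] with t ht
  refine isPoissonPoint_of_tendsto_setLAverage hp hg ?_
  simpa only [setLAverage_eq, Function.comp_def] using
    ht.comp (Besicovitch.tendsto_filterAt volume t)

lemma IsPoissonPoint.tendsto_integral_smul [NormedSpace ℝ E] [CompleteSpace E]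
    (hg : AEStronglyMeasurable g) (ht : IsPoissonPoint g t) {k : ℝ → ℝ → ℝ} {c : ℝ}
    (hkm : ∀ y, AEStronglyMeasurable (k y))
    (hk : ∀ y > 0, ∀ u, |k y u| ≤ poissonKernelUHP y u) (hc : ∀ y > 0, ∫ u, k y u = c) :
    Tendsto (fun y ↦ ∫ x, k y (x - t) • g x) (𝓝[>] 0) (𝓝 (c • g t)) := by
  rw [tendsto_iff_edist_tendsto_0]
  refine tendsto_of_tendsto_of_tendsto_of_le_of_le' tendsto_const_nhds ht
    (.of_forall fun y ↦ zero_le) ?_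
  filter_upwards [self_mem_nhdsWithin, ht.eventually_lt_const ENNReal.zero_lt_top] with y hy hfin
  have hky : Integrable fun x ↦ k y (x - t) :=
    ((integrable_poissonKernelUHP hy).mono' (hkm y) (.of_forall (hk y hy))).comp_sub_right t
  have hle (x : ℝ) : ‖k y (x - t) • (g x - g t)‖ₑ
      ≤ ENNReal.ofReal (poissonKernelUHP y (x - t)) * ‖g x - g t‖ₑ := by
    rw [enorm_smul]
    gcongr
    rw [← ofReal_norm]
    exact ENNReal.ofReal_le_ofReal (hk y hy (x - t))
  have hdiff : Integrable fun x ↦ k y (x - t) • (g x - g t) :=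
    ⟨hky.1.smul (hg.sub aestronglyMeasurable_const), (lintegral_mono hle).trans_lt hfin⟩
  have hsplit : ∫ x, k y (x - t) • g x
      = (∫ x, k y (x - t) • (g x - g t)) + c • g t := by
    rw [← hc y hy, ← integral_sub_right_eq_self (k y) t, ← integral_smul_const,
      ← integral_add hdiff (hky.smul_const _)]
    simp only [smul_sub, sub_add_cancel]
  rw [hsplit, edist_eq_enorm_sub, add_sub_cancel_right]
  exact (enorm_integral_le_lintegral_enorm _).trans (lintegral_mono hle)

end PoissonPoint

/-- The conjugate Poisson kernel of the upper half-plane at height `y`, multiplied by `π`. -/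
noncomputable def conjPoissonKernelUHP (y u : ℝ) : ℝ := u / (u ^ 2 + y ^ 2)

/-- The kernel `1 / u` of the Hilbert transform, truncated at `|u| = ε`. -/
noncomputable def truncHilbertKernel (ε : ℝ) : ℝ → ℝ := {u | ε < |u|}.indicator (·⁻¹)

lemma measurable_conjPoissonKernelUHP (y : ℝ) : Measurable (conjPoissonKernelUHP y) := by
  unfold conjPoissonKernelUHP
  fun_prop

lemma measurable_truncHilbertKernel (ε : ℝ) : Measurable (truncHilbertKernel ε) :=
  measurable_inv.indicator (measurableSet_lt measurable_const measurable_abs)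

lemma inv_sub_mul_I (u y : ℝ) :
    ((u : ℂ) - y * I)⁻¹ = conjPoissonKernelUHP y u + I * poissonKernelUHP y u := by
  apply Complex.ext <;>
    simp [conjPoissonKernelUHP, poissonKernelUHP, Complex.inv_re, Complex.inv_im,
      Complex.normSq_apply, ← pow_two, -Complex.ofReal_div]

lemma memLp_two_of_sq_le_mul_poissonKernelUHP {k : ℝ → ℝ} (hk : AEStronglyMeasurable k) {y : ℝ}
    (hy : 0 < y) {C : ℝ} (h : ∀ u, k u ^ 2 ≤ C * poissonKernelUHP y u) : MemLp k 2 :=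
  (memLp_two_iff_integrable_sq hk).2 <| ((integrable_poissonKernelUHP hy).const_mul C).mono'
    (hk.pow 2) (.of_forall fun u ↦ by simpa using h u)

lemma memLp_two_poissonKernelUHP {y : ℝ} (hy : y ≠ 0) : MemLp (poissonKernelUHP y) 2 := by
  refine memLp_two_of_sq_le_mul_poissonKernelUHP
    (measurable_poissonKernelUHP y).aestronglyMeasurable (abs_pos.2 hy) (C := |y|⁻¹) fun u ↦ ?_
  simp only [poissonKernelUHP, sq_abs]
  rw [div_pow, ← mul_div_assoc, inv_mul_cancel₀ (abs_ne_zero.2 hy),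
    div_le_div_iff₀ (by positivity) (by positivity)]
  nlinarith [mul_nonneg (sq_nonneg u) (add_nonneg (sq_nonneg u) (sq_nonneg y))]

lemma memLp_two_conjPoissonKernelUHP {y : ℝ} (hy : y ≠ 0) :
    MemLp (conjPoissonKernelUHP y) 2 := by
  refine memLp_two_of_sq_le_mul_poissonKernelUHP
    (measurable_conjPoissonKernelUHP y).aestronglyMeasurable (abs_pos.2 hy) (C := |y|⁻¹) fun u ↦ ?_
  simp only [conjPoissonKernelUHP, poissonKernelUHP, sq_abs]
  rw [div_pow, ← mul_div_assoc, inv_mul_cancel₀ (abs_ne_zero.2 hy),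
    div_le_div_iff₀ (by positivity) (by positivity)]
  nlinarith [mul_nonneg (sq_nonneg y) (add_nonneg (sq_nonneg u) (sq_nonneg y))]

lemma memLp_two_truncHilbertKernel {ε : ℝ} (hε : 0 < ε) : MemLp (truncHilbertKernel ε) 2 := by
  refine memLp_two_of_sq_le_mul_poissonKernelUHP
    (measurable_truncHilbertKernel ε).aestronglyMeasurable hε (C := 2 / ε) fun u ↦ ?_
  rcases le_or_gt |u| ε with hu | hu
  · have := poissonKernelUHP_nonneg hε.le u
    rw [truncHilbertKernel, indicator_of_notMem (by simpa using hu), zero_pow two_ne_zero]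
    positivity
  · have hu0 : u ≠ 0 := abs_pos.1 (hε.trans hu)
    have hsq : ε ^ 2 ≤ u ^ 2 := sq_le_sq.2 (by rw [abs_of_pos hε]; exact hu.le)
    rw [truncHilbertKernel, indicator_of_mem (by exact hu), poissonKernelUHP, inv_pow, ← one_div,
      div_mul_div_comm, div_le_div_iff₀ (by positivity) (by positivity)]
    nlinarith

lemma abs_truncHilbertKernel_sub_conjPoissonKernelUHP_le {ε : ℝ} (hε : 0 < ε) (u : ℝ) :
    |truncHilbertKernel ε u - conjPoissonKernelUHP ε u| ≤ poissonKernelUHP ε u := by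
  have hpos : 0 < u ^ 2 + ε ^ 2 := by positivity
  rcases le_or_gt |u| ε with hu | hu
  · rw [truncHilbertKernel, indicator_of_notMem (by simpa using hu), zero_sub, abs_neg,
      conjPoissonKernelUHP, poissonKernelUHP, abs_div, abs_of_pos hpos]
    gcongr
  · have hu0 : 0 < |u| := hε.trans hu
    have hdiff : u⁻¹ - u / (u ^ 2 + ε ^ 2) = ε ^ 2 / (u * (u ^ 2 + ε ^ 2)) := by
      have := abs_pos.1 hu0
      field_simp
      ring
    rw [truncHilbertKernel, indicator_of_mem (by exact hu), conjPoissonKernelUHP, poissonKernelUHP,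
      hdiff, abs_div, abs_mul, abs_of_pos hpos, abs_of_nonneg (sq_nonneg ε),
      div_le_div_iff₀ (by positivity) hpos]
    nlinarith [mul_pos hε hpos]

lemma integral_truncHilbertKernel_sub_conjPoissonKernelUHP (ε : ℝ) :
    ∫ u, (truncHilbertKernel ε u - conjPoissonKernelUHP ε u) = 0 := by
  have hodd (u : ℝ) : truncHilbertKernel ε (-u) - conjPoissonKernelUHP ε (-u)
      = -(truncHilbertKernel ε u - conjPoissonKernelUHP ε u) := by
    simp only [truncHilbertKernel, conjPoissonKernelUHP, indicator_apply, mem_ofPred_eq, abs_neg,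
      inv_neg, even_two.neg_pow, neg_div]
    split_ifs <;> ring
  rw [← self_eq_neg]
  nth_rewrite 1 [← integral_neg_eq_self]
  simp only [hodd, integral_neg]

section HilbertTransform

variable {E : Type*} [NormedAddCommGroup E]

lemma integrable_comp_sub_right_smul [NormedSpace ℝ E] {k : ℝ → ℝ} {f : ℝ → E} (hk : MemLp k 2)
    (hf : MemLp f 2) (t : ℝ) : Integrable fun x ↦ k (x - t) • f x := by
  have hkt : MemLp (fun x ↦ k (x - t)) 2 :=
    hk.comp_measurePreserving (measurePreserving_sub_right volume t)
  have h : MemLp ((fun x ↦ k (x - t)) • f) 1 := hf.smul hkt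
  exact memLp_one_iff_integrable.1 h

lemma integral_inv_sub_smul_eq_add [NormedSpace ℂ E] {f : ℝ → E} (hf : MemLp f 2) {y : ℝ}
    (hy : y ≠ 0) (t : ℝ) :
    ∫ x : ℝ, ((x : ℂ) - (t + y * I))⁻¹ • f x
      = (∫ x, conjPoissonKernelUHP y (x - t) • f x)
        + I • ∫ x, poissonKernelUHP y (x - t) • f x := by
  rw [← integral_smul, ← integral_add
    (integrable_comp_sub_right_smul (memLp_two_conjPoissonKernelUHP hy) hf t)
    ((integrable_comp_sub_right_smul (memLp_two_poissonKernelUHP hy) hf t).fun_smul I)]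
  congr with x
  rw [← sub_sub, ← Complex.ofReal_sub, inv_sub_mul_I, add_smul, mul_smul, Complex.coe_smul,
    Complex.coe_smul]

variable [InnerProductSpace ℂ E] [CompleteSpace E] (F : Lp E 2 (volume : Measure ℝ))

/-- The Hilbert transform on `L²(ℝ)` with the sign of the kernel `1 / (π (x - t))`, defined by its
Fourier multiplier: `I` on `(0, ∞)` and `-I` on `(-∞, 0)`. -/
noncomputable def hilbertL2 : Lp E 2 (volume : Measure ℝ) := (2 * I) • hardyProj F - I • F

lemma coeFn_hilbertL2 : hilbertL2 F =ᵐ[volume] fun x ↦ (2 * I) • hardyProj F x - I • F x := by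
  filter_upwards [Lp.coeFn_sub ((2 * I) • hardyProj F) (I • F),
    Lp.coeFn_smul (2 * I) (hardyProj F), Lp.coeFn_smul I F] with x hsub hP hF
  rw [hilbertL2, hsub, Pi.sub_apply, hP, hF, Pi.smul_apply, Pi.smul_apply]

lemma integral_conjPoissonKernelUHP_smul {y : ℝ} (hy : 0 < y) (t : ℝ) :
    ∫ x, conjPoissonKernelUHP y (x - t) • F x
      = ∫ x, poissonKernelUHP y (x - t) • hilbertL2 F x := by
  have hupper := integral_inv_sub_smul_hardyProj_of_im_pos F (z := t + y * I) (by simpa using hy)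
  have hlower := integral_inv_sub_smul_hardyProj_of_im_neg F (z := t + (-y : ℝ) * I)
    (by simpa using hy)
  rw [integral_inv_sub_smul_eq_add (Lp.memLp _) hy.ne',
    integral_inv_sub_smul_eq_add (Lp.memLp _) hy.ne'] at hupper
  rw [integral_inv_sub_smul_eq_add (Lp.memLp _) (neg_ne_zero.2 hy.ne')] at hlower
  have hK := memLp_two_poissonKernelUHP hy.ne'
  have hH : ∫ x, poissonKernelUHP y (x - t) • hilbertL2 F x
      = (2 * I) • (∫ x, poissonKernelUHP y (x - t) • hardyProj F x)
        - I • ∫ x, poissonKernelUHP y (x - t) • F x := by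
    rw [← integral_smul, ← integral_smul, ← integral_sub
      ((integrable_comp_sub_right_smul hK (Lp.memLp _) t).fun_smul _)
      ((integrable_comp_sub_right_smul hK (Lp.memLp _) t).fun_smul _)]
    refine integral_congr_ae ?_
    filter_upwards [coeFn_hilbertL2 F] with x hx
    rw [hx, smul_sub, smul_comm _ (2 * I), smul_comm _ I]
  have hPy : ∀ u, poissonKernelUHP (-y) u = -poissonKernelUHP y u := fun u ↦ by
    simp only [poissonKernelUHP, neg_sq, neg_div]
  have hQy : ∀ u, conjPoissonKernelUHP (-y) u = conjPoissonKernelUHP y u := fun u ↦ by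
    simp only [conjPoissonKernelUHP, neg_sq]
  simp only [hPy, hQy, neg_smul, integral_neg, smul_neg] at hlower
  rw [hH]
  rw [← sub_eq_add_neg, sub_eq_zero] at hlower
  rw [eq_sub_iff_add_eq, ← hupper, hlower, two_mul, add_smul]

lemma ae_tendsto_integral_truncHilbertKernel_smul :
    ∀ᵐ t, Tendsto (fun ε ↦ ∫ x, truncHilbertKernel ε (x - t) • F x) (𝓝[>] 0)
      (𝓝 (Real.pi • hilbertL2 F t)) := by
  filter_upwards [ae_isPoissonPoint one_le_two (Lp.memLp F),
    ae_isPoissonPoint one_le_two (Lp.memLp (hilbertL2 F))] with t hF hH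
  have hdiff := hF.tendsto_integral_smul (Lp.aestronglyMeasurable F)
    (fun ε ↦ ((measurable_truncHilbertKernel ε).sub
      (measurable_conjPoissonKernelUHP ε)).aestronglyMeasurable)
    (fun ε hε ↦ abs_truncHilbertKernel_sub_conjPoissonKernelUHP_le hε)
    (fun ε _ ↦ integral_truncHilbertKernel_sub_conjPoissonKernelUHP ε)
  have hconj := hH.tendsto_integral_smul (Lp.aestronglyMeasurable _)
    (fun y ↦ (measurable_poissonKernelUHP y).aestronglyMeasurable)
    (fun y hy u ↦ (abs_of_nonneg (poissonKernelUHP_nonneg (le_of_lt hy) u)).le)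
    (fun y hy ↦ integral_poissonKernelUHP hy)
  have hsum := hdiff.add hconj
  rw [zero_smul, zero_add] at hsum
  refine hsum.congr' ?_
  filter_upwards [self_mem_nhdsWithin] with ε (hε : 0 < ε)
  have htrunc := memLp_two_truncHilbertKernel hε
  have hQ := memLp_two_conjPoissonKernelUHP hε.ne'
  rw [← integral_conjPoissonKernelUHP_smul F hε, ← integral_add
    (integrable_comp_sub_right_smul (htrunc.sub hQ) (Lp.memLp F) t)
    (integrable_comp_sub_right_smul hQ (Lp.memLp F) t)]
  simp only [Pi.sub_apply, ← add_smul, sub_add_cancel]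

lemma eLpNorm_restrict_le_eLpNorm_hilbertL2_add (s : Set ℝ) :
    eLpNorm F 2 (volume.restrict s)
      ≤ eLpNorm (hilbertL2 F) 2 (volume.restrict s) + 2 * eLpNorm (hardyProj F) 2 volume := by
  have hsplit : F =ᵐ[volume.restrict s] I • ⇑(hilbertL2 F) + (2 : ℂ) • ⇑(hardyProj F) := by
    filter_upwards [ae_restrict_of_ae (coeFn_hilbertL2 F)] with x hx
    simp only [Pi.add_apply, Pi.smul_apply, hx, smul_sub, smul_smul, mul_left_comm I,
      Complex.I_mul_I]
    module
  have hmeas {G : Lp E 2 (volume : Measure ℝ)} : AEStronglyMeasurable G (volume.restrict s) :=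
    (Lp.aestronglyMeasurable G).restrict
  calc eLpNorm F 2 (volume.restrict s)
      = eLpNorm (I • ⇑(hilbertL2 F) + (2 : ℂ) • ⇑(hardyProj F)) 2 (volume.restrict s) :=
        eLpNorm_congr_ae hsplit
    _ ≤ ‖I‖ₑ * eLpNorm (hilbertL2 F) 2 (volume.restrict s)
        + ‖(2 : ℂ)‖ₑ * eLpNorm (hardyProj F) 2 (volume.restrict s) := by
        rw [← eLpNorm_const_smul, ← eLpNorm_const_smul]
        exact eLpNorm_add_le (hmeas.const_smul _) (hmeas.const_smul _) one_le_two
    _ ≤ eLpNorm (hilbertL2 F) 2 (volume.restrict s) + 2 * eLpNorm (hardyProj F) 2 volume := by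
        have hI : ‖I‖ₑ = 1 := by simp [enorm_eq_nnnorm]
        have htwo : ‖(2 : ℂ)‖ₑ = 2 := by simp [enorm_eq_nnnorm]
        rw [hI, htwo, one_mul]
        gcongr
        exact Measure.restrict_le_self

end HilbertTransform

instance isFiniteMeasure_volIoo : IsFiniteMeasure volIoo := by
  rw [volIoo]
  infer_instance

lemma Ioo_inter_lt_abs_sub {a b t ε : ℝ} (ht : t ∈ Ioo a b) (hε : 0 ≤ ε) :
    Ioo a b ∩ {x | ε < |x - t|} = Ioo a (t - ε) ∪ Ioo (t + ε) b := by
  obtain ⟨hat, htb⟩ := ht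
  ext x
  simp only [mem_inter_iff, mem_Ioo, mem_ofPred_eq, lt_abs, mem_union]
  grind

lemma setIntegral_div_sub_add_setIntegral_div_sub {f : ℝ → ℂ} {a b t ε : ℝ}
    (hf : MemLp ((Ioo a b).indicator f) 2) (ht : t ∈ Ioo a b) (hε : 0 < ε) :
    (∫ x in Ioo a (t - ε), f x / ((x : ℂ) - t)) + ∫ x in Ioo (t + ε) b, f x / ((x : ℂ) - t)
      = ∫ x, truncHilbertKernel ε (x - t) • (Ioo a b).indicator f x := by
  have hm : MeasurableSet (Ioo a (t - ε) ∪ Ioo (t + ε) b) :=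
    measurableSet_Ioo.union measurableSet_Ioo
  have hfun : (fun x ↦ truncHilbertKernel ε (x - t) • (Ioo a b).indicator f x)
      = (Ioo a (t - ε) ∪ Ioo (t + ε) b).indicator fun x ↦ f x / ((x : ℂ) - t) := by
    ext x
    simp only [← Ioo_inter_lt_abs_sub ht hε.le, truncHilbertKernel, indicator_apply,
      mem_inter_iff, mem_ofPred_eq]
    split_ifs <;> simp_all [div_eq_inv_mul]
  have hint : IntegrableOn (fun x ↦ f x / ((x : ℂ) - t)) (Ioo a (t - ε) ∪ Ioo (t + ε) b) := by
    rw [← integrable_indicator_iff hm, ← hfun]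
    exact integrable_comp_sub_right_smul (memLp_two_truncHilbertKernel hε) hf t
  have hdisj : Disjoint (Ioo a (t - ε)) (Ioo (t + ε) b) :=
    disjoint_left.2 fun x hl hr ↦ by linarith [hl.2, hr.1]
  rw [hfun, integral_indicator hm, setIntegral_union hdisj measurableSet_Ioo hint.left_of_union
    hint.right_of_union]

section FiniteHilbertTransform

variable {f : ℝ → ℂ} {F : Lp ℂ 2 (volume : Measure ℝ)}

lemma fht_ae_eq_hilbertL2 (hF : F =ᵐ[volume] (Ioo (-1) 1).indicator f) :
    fht f =ᵐ[volIoo] hilbertL2 F := by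
  rw [volIoo, EventuallyEq, ae_restrict_iff' measurableSet_Ioo]
  filter_upwards [ae_tendsto_integral_truncHilbertKernel_smul F] with t htend ht
  have hmem : MemLp ((Ioo (-1) 1).indicator f) 2 := (memLp_congr_ae hF).1 (Lp.memLp F)
  have hpi : (Real.pi : ℂ) ≠ 0 := Complex.ofReal_ne_zero.2 Real.pi_ne_zero
  have hlim := htend.const_mul (Real.pi : ℂ)⁻¹
  rw [Complex.real_smul, inv_mul_cancel_left₀ hpi] at hlim
  refine Tendsto.limUnder_eq (hlim.congr' ?_)
  filter_upwards [self_mem_nhdsWithin] with ε hε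
  rw [setIntegral_div_sub_add_setIntegral_div_sub hmem ht hε]
  congr 1
  refine integral_congr_ae ?_
  filter_upwards [hF] with x hx
  rw [hx]

lemma eLpNorm_volIoo_le_eLpNorm_fht_add (hF : F =ᵐ[volume] (Ioo (-1) 1).indicator f) :
    eLpNorm f 2 volIoo ≤ eLpNorm (fht f) 2 volIoo + 2 * eLpNorm (hardyProj F) 2 volume := by
  have hf : F =ᵐ[volIoo] f :=
    EventuallyEq.trans (ae_restrict_of_ae hF) (indicator_ae_eq_restrict measurableSet_Ioo)
  rw [← eLpNorm_congr_ae hf, eLpNorm_congr_ae (fht_ae_eq_hilbertL2 hF)]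
  exact eLpNorm_restrict_le_eLpNorm_hilbertL2_add F (Ioo (-1) 1)

lemma memLp_indicator_of_memLp_volIoo (hf : MemLp f 2 volIoo) :
    MemLp ((Ioo (-1) 1).indicator f) 2 :=
  (memLp_indicator_iff_restrict measurableSet_Ioo).2 hf

lemma integrable_indicator_of_memLp_volIoo (hf : MemLp f 2 volIoo) :
    Integrable ((Ioo (-1) 1).indicator f) :=
  (integrable_indicator_iff measurableSet_Ioo).2 (hf.integrable one_le_two)

lemma eLpNorm_volIoo_le_eLpNorm_fht_fourierChar_smul_add (hf : MemLp f 2 volIoo) (s : ℝ) :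
    eLpNorm f 2 volIoo ≤ eLpNorm (fht fun x ↦ 𝐞 (-inner ℝ x s) • f x) 2 volIoo
      + 2 * eLpNorm (𝓕 ((Ioo (-1) 1).indicator f)) 2 (volume.restrict (Ioi s)) := by
  let f₀ : ℝ → ℂ := (Ioo (-1) 1).indicator f
  have hf₀ : MemLp f₀ 2 := memLp_indicator_of_memLp_volIoo hf
  have hf₀_int : Integrable f₀ := integrable_indicator_of_memLp_volIoo hf
  have hmod : MemLp (fun x ↦ 𝐞 (-inner ℝ x s) • f₀ x) 2 :=
    hf₀.of_le ((Real.fourierIntegral_convergent_iff s).2 hf₀_int).1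
      (.of_forall fun x ↦ (Circle.norm_smul _ _).le)
  have hF : hmod.toLp _ =ᵐ[volume] (Ioo (-1) 1).indicator fun x ↦ 𝐞 (-inner ℝ x s) • f x := by
    simpa only [f₀, indicator_smul] using hmod.coeFn_toLp
  calc eLpNorm f 2 volIoo
      = eLpNorm (fun x ↦ 𝐞 (-inner ℝ x s) • f x) 2 volIoo :=
        eLpNorm_congr_norm_ae (.of_forall fun x ↦ (Circle.norm_smul _ _).symm)
    _ ≤ _ := eLpNorm_volIoo_le_eLpNorm_fht_add hF
    _ = _ := by rw [eLpNorm_hardyProj_of_ae_eq_fourierChar_smul hf₀_int hf₀ s hmod.coeFn_toLp]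

end FiniteHilbertTransform

lemma integral_mul_exp_neg_mul_Ioi {b : ℝ} (hb : 0 < b) :
    ∫ x in Ioi (0 : ℝ), x * Real.exp (-(b * x)) = (b ^ 2)⁻¹ := by
  simpa [show (2 : ℝ) - 1 = 1 by norm_num] using
    Real.integral_rpow_mul_exp_neg_mul_Ioi two_pos hb

lemma fhtBeta_le_one : fhtBeta ≤ 1 := by
  have hint := integral_mul_exp_neg_mul_Ioi Real.pi_pos
  have hle : ∫ l in Ioi (0 : ℝ), 4 * l / (Real.exp (Real.pi * l) + 1)
      ≤ ∫ l in Ioi (0 : ℝ), 4 * (l * Real.exp (-(Real.pi * l))) := by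
    refine integral_mono_of_nonneg ?_
      (.const_mul (.of_integral_ne_zero (hint.trans_ne (by positivity))) 4) ?_ <;>
    refine (ae_restrict_iff' measurableSet_Ioi).2 (.of_forall fun l (hl : 0 < l) ↦ ?_)
    · positivity
    · simp only [Real.exp_neg, ← div_eq_mul_inv, ← mul_div_assoc]
      gcongr
      exact (lt_add_one _).le
  rw [integral_const_mul, hint] at hle
  rw [fhtBeta, Real.sqrt_le_one]
  refine hle.trans ?_
  rw [← div_eq_mul_inv, div_le_one (by positivity)]
  nlinarith [Real.pi_gt_three]

theorem stmt18_general (φ : ℝ → ℂ) (hφ : MemLp φ 2 volIoo) :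
    eLpNorm φ 2 volIoo
      ≤ ⨆ θ : {θ : ℝ → ℂ // Measurable θ ∧ ∀ᵐ x ∂volIoo, ‖θ x‖ = 1},
          eLpNorm (fht fun x ↦ θ.1 x * φ x) 2 volIoo := by
  let θ (n : ℕ) : {θ : ℝ → ℂ // Measurable θ ∧ ∀ᵐ x ∂volIoo, ‖θ x‖ = 1} :=
    ⟨fun x ↦ 𝐞 (-inner ℝ x (n : ℝ)), by fun_prop, .of_forall fun x ↦ Circle.norm_coe _⟩
  have htail := tendsto_eLpNorm_fourier_restrict_Ioi (integrable_indicator_of_memLp_volIoo hφ)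
    (memLp_indicator_of_memLp_volIoo hφ)
  have hlim := (ENNReal.Tendsto.const_mul htail (.inr ENNReal.ofNat_ne_top) (a := 2)).const_add
      (⨆ θ : {θ : ℝ → ℂ // Measurable θ ∧ ∀ᵐ x ∂volIoo, ‖θ x‖ = 1},
        eLpNorm (fht fun x ↦ θ.1 x * φ x) 2 volIoo)
  rw [mul_zero, add_zero] at hlim
  refine ge_of_tendsto' hlim fun n ↦
    (eLpNorm_volIoo_le_eLpNorm_fht_fourierChar_smul_add hφ n).trans (add_le_add_left ?_ _)
  exact le_iSup (fun θ : {θ : ℝ → ℂ // Measurable θ ∧ ∀ᵐ x ∂volIoo, ‖θ x‖ = 1} ↦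
    eLpNorm (fht fun x ↦ θ.1 x * φ x) 2 volIoo) (θ n)

/-- Theorem 5.2: `β‖φ‖_{L²} ≤ sup_{|θ|=1} ‖T(θφ)‖_{L²}` for every
`ℂ`-valued Borel simple function `φ` on `(−1,1)`. -/
theorem stmt18 (φ : MeasureTheory.SimpleFunc ℝ ℂ) :
    ENNReal.ofReal fhtBeta * eLpNorm (fun x => φ x) 2 volIoo
      ≤ ⨆ θ : {θ : ℝ → ℂ // Measurable θ ∧ ∀ᵐ x ∂volIoo, ‖θ x‖ = 1},
          eLpNorm (fht fun x => θ.1 x * φ x) 2 volIoo := by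
  exact (mul_le_of_le_one_left' (ENNReal.ofReal_le_one.2 fhtBeta_le_one)).trans
    (stmt18_general φ (φ.memLp_of_isFiniteMeasure 2 _))
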